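/- arXiv:0812.1093 — 2 statements merged into one kernel-verified Lean document; each statement's English description precedes it below -/
import Mathlib

section
/- Let G be a finite simple graph and let w be a closed walk in G whose list of darts contains every dart of G exactly once (each edge is traversed exactly twice, once in each direction). Then for every vertex v of G, the number of indices i with 0 ≤ i < length(w) such that the i-th vertex of w equals v is exactly the degree of v in G. In particular, in the virtual ring of an oriented tree, each process appears exactly as many times as its number of neighbors. -/
theorem card_filter_getVert_eq_countP_darts
    {V : Type*} [DecidableEq V] (G : SimpleGraph V) (v : V) {a b : V} (w : G.Walk a b) :
    ((Finset.range w.length).filter (fun i => w.getVert i = v)).card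
      = w.darts.countP (fun d => d.fst = v) := by
  induction w with
  | nil => rfl
  | cons h p ih =>
    rw [SimpleGraph.Walk.darts_cons, List.countP_cons, ← ih, SimpleGraph.Walk.length_cons,
      Finset.card_filter, Finset.card_filter, Finset.sum_range_succ']
    simp [-Finset.sum_boole]
    rfl

/-- If `w` is a closed walk in a finite simple graph `G` whose list of darts
contains every dart exactly once, then every vertex `v` occurs among the
positions `0 ≤ i < length w` of `w` exactly `degree v` times. -/
theorem dart_eulerian_closed_walk_vertex_count
    {V : Type*} [Fintype V] [DecidableEq V]
    (G : SimpleGraph V) [DecidableRel G.Adj] {r : V} (w : G.Walk r r)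
    (hw : ∀ d : G.Dart, w.darts.count d = 1) (v : V) :
    ((Finset.range w.length).filter (fun i => w.getVert i = v)).card
      = G.degree v := by
  rw [card_filter_getVert_eq_countP_darts, ← G.dart_fst_fiber_card_eq_degree v]
  have hnd : w.darts.Nodup := List.nodup_iff_count_le_one.mpr fun d => (hw d).le
  rw [List.countP_eq_length_filter, ← List.toFinset_card_of_nodup (hnd.filter _)]
  congr 1
  ext d
  have hd : d ∈ w.darts := List.count_pos_iff.mp (by rw [hw d]; exact Nat.one_pos)
  simp [hd]
end

section
/- Let G be a finite tree with n ≥ 2 vertices, let w be a closed walk in G whose list of darts contains every dart of G exactly once, and let p be a leaf of G (a vertex of degree 1). Then p occurs exactly once among the positions 0 ≤ i < length(w) of w, and the total number of positions 0 ≤ i < length(w) at which a vertex different from p occurs is exactly 2n−3. -/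
/-- In a finite tree on `n ≥ 2` vertices, a closed walk whose darts contain every
dart exactly once visits a leaf `p` exactly once among positions `0 ≤ i < length w`,
and the vertices different from `p` occupy exactly `2n - 3` positions. -/
theorem dart_eulerian_closed_walk_leaf_count
    {V : Type*} [Fintype V] [DecidableEq V]
    (G : SimpleGraph V) [DecidableRel G.Adj] (hG : G.IsTree)
    (hn : 2 ≤ Fintype.card V) {r : V} (w : G.Walk r r)
    (hw : ∀ d : G.Dart, w.darts.count d = 1)
    (p : V) (hp : G.degree p = 1) :
    ((Finset.range w.length).filter (fun i => w.getVert i = p)).card = 1 ∧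
    ((Finset.range w.length).filter (fun i => w.getVert i ≠ p)).card
      = 2 * Fintype.card V - 3 := by
  have hnd : w.darts.Nodup := List.nodup_iff_count_le_one.2 fun d => (hw d).le
  have hmem : ∀ d : G.Dart, d ∈ w.darts := fun d =>
    List.count_pos_iff.1 (by rw [hw d]; exact Nat.one_pos)
  have hlen : w.length = 2 * G.edgeFinset.card := by
    rw [← G.dart_card_eq_twice_card_edges, ← w.length_darts,
      ← List.toFinset_card_of_nodup hnd, ← Finset.card_univ]
    congr 1
    ext d
    simp [hmem d]
  have hE := hG.card_edgeFinset
  have h1 : ((Finset.range w.length).filter (fun i => w.getVert i = p)).card = 1 := by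
    rw [← hp, ← G.dart_fst_fiber_card_eq_degree p]
    refine Finset.card_bij
      (fun i hi => w.darts[i]'(by
        rw [w.length_darts]; exact Finset.mem_range.1 (Finset.mem_filter.1 hi).1)) ?_ ?_ ?_
    · intro i hi
      rw [Finset.mem_filter] at hi
      rw [SimpleGraph.Walk.darts_getElem_eq_getVert]
      simpa using hi.2
    · intro i hi j hj hij
      exact (hnd.getElem_inj_iff).1 hij
    · intro d hd
      obtain ⟨i, hi, rfl⟩ := List.mem_iff_getElem.1 (hmem d)
      refine ⟨i, ?_, rfl⟩
      rw [SimpleGraph.Walk.darts_getElem_eq_getVert] at hd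
      rw [w.length_darts] at hi
      simpa [hi] using hd
  refine ⟨h1, ?_⟩
  have h2 := Finset.card_filter_add_card_filter_not (s := Finset.range w.length)
    (fun i => w.getVert i = p)
  rw [Finset.card_range] at h2
  simp only [ne_eq]
  omega
end
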